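/- Let 1 ≤ K' ≤ K, let δ ≥ 0, and let M, C_1, …, C_K, Z_1, …, Z_K be finite discrete random variables with C = (C_1, …, C_K). Suppose that for each k ∈ {1, …, K'}, the triple (Z_1, …, Z_{k−1}, C) → (C_k, M) → Z_k forms a Markov chain, and that the per-frame leakages satisfy I(M; Z_k | C_k) ≤ δ for every k ∈ {1, …, K'}. Then the cumulative leakage up to frame K' satisfies I(M; Z_1, …, Z_{K'} | C) ≤ K'·δ. -/

import Mathlib

open scoped Classical

/-- Probability of an event under pmf `p` on a finite sample space. -/
noncomputable def pr {Ω : Type*} [Fintype Ω] (p : Ω → ℝ) (E : Ω → Prop) : ℝ :=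
  ∑ ω, if E ω then p ω else 0

/-- Shannon entropy of a finite discrete random variable `X`. -/
noncomputable def entropy {Ω α : Type*} [Fintype Ω] [Fintype α] (p : Ω → ℝ) (X : Ω → α) : ℝ :=
  -∑ x, pr p (fun ω => X ω = x) * Real.log (pr p (fun ω => X ω = x))

/-- Conditional entropy `H(X|Y) = H(X,Y) - H(Y)`. -/
noncomputable def condEntropy {Ω α β : Type*} [Fintype Ω] [Fintype α] [Fintype β]
    (p : Ω → ℝ) (X : Ω → α) (Y : Ω → β) : ℝ :=
  entropy p (fun ω => (X ω, Y ω)) - entropy p Y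

/-- Mutual information `I(X;Y) = H(X) + H(Y) - H(X,Y)`. -/
noncomputable def mutualInfo {Ω α β : Type*} [Fintype Ω] [Fintype α] [Fintype β]
    (p : Ω → ℝ) (X : Ω → α) (Y : Ω → β) : ℝ :=
  entropy p X + entropy p Y - entropy p (fun ω => (X ω, Y ω))

/-- Conditional mutual information `I(X;Y|Z) = H(X,Z) + H(Y,Z) - H(X,Y,Z) - H(Z)`. -/
noncomputable def condMutualInfo {Ω α β γ : Type*} [Fintype Ω] [Fintype α] [Fintype β] [Fintype γ]
    (p : Ω → ℝ) (X : Ω → α) (Y : Ω → β) (Z : Ω → γ) : ℝ :=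
  entropy p (fun ω => (X ω, Z ω)) + entropy p (fun ω => (Y ω, Z ω))
    - entropy p (fun ω => (X ω, Y ω, Z ω)) - entropy p Z

/-- `A → D → B` Markov chain: `A` and `B` are conditionally independent given `D`. -/
def CondIndep {Ω α β δ : Type*} [Fintype Ω]
    (p : Ω → ℝ) (A : Ω → α) (B : Ω → β) (D : Ω → δ) : Prop :=
  ∀ (a : α) (b : β) (d : δ),
    pr p (fun ω => A ω = a ∧ B ω = b ∧ D ω = d) * pr p (fun ω => D ω = d)
      = pr p (fun ω => A ω = a ∧ D ω = d) * pr p (fun ω => B ω = b ∧ D ω = d)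

lemma sum_pr_mul {Ω α : Type*} [Fintype Ω] [Fintype α] (p : Ω → ℝ) (X : Ω → α) (f : α → ℝ) :
    ∑ x, pr p (fun ω => X ω = x) * f x = ∑ ω, p ω * f (X ω) := by
  simp only [pr, Finset.sum_mul]
  rw [Finset.sum_comm]
  refine Finset.sum_congr rfl fun ω _ => ?_
  simp [ite_mul]

lemma entropy_eq_sum {Ω α : Type*} [Fintype Ω] [Fintype α] (p : Ω → ℝ) (X : Ω → α) :
    entropy p X = -∑ ω, p ω * Real.log (pr p (fun ω' => X ω' = X ω)) := by
  rw [entropy, sum_pr_mul p X (fun x => Real.log (pr p (fun ω' => X ω' = x)))]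

lemma entropy_congr {Ω α β : Type*} [Fintype Ω] [Fintype α] [Fintype β] (p : Ω → ℝ)
    (X : Ω → α) (Y : Ω → β) (h : ∀ ω ω', X ω' = X ω ↔ Y ω' = Y ω) :
    entropy p X = entropy p Y := by
  simp only [entropy_eq_sum, h]

lemma pr_nonneg {Ω : Type*} [Fintype Ω] (p : Ω → ℝ) (hp : ∀ ω, 0 ≤ p ω) (E : Ω → Prop) :
    0 ≤ pr p E := by
  refine Finset.sum_nonneg fun ω _ => ?_
  split_ifs
  · exact hp ω
  · exact le_rfl

lemma pr_pos {Ω : Type*} [Fintype Ω] (p : Ω → ℝ) (hp : ∀ ω, 0 ≤ p ω) (E : Ω → Prop)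
    (ω : Ω) (hω : 0 < p ω) (hE : E ω) : 0 < pr p E := by
  refine Finset.sum_pos' (fun ω _ => ?_) ⟨ω, Finset.mem_univ _, by simpa [hE] using hω⟩
  split_ifs
  · exact hp ω
  · exact le_rfl

lemma sum_pr_and {Ω α : Type*} [Fintype Ω] [Fintype α] (p : Ω → ℝ) (X : Ω → α) (E : Ω → Prop) :
    ∑ x, pr p (fun ω => X ω = x ∧ E ω) = pr p E := by
  simp only [pr]
  rw [Finset.sum_comm]
  refine Finset.sum_congr rfl fun ω _ => ?_
  by_cases h : E ω <;> simp [h]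

/-- Entropy combination as a single expectation. -/
lemma entropy_comb {Ω α β γ : Type*} [Fintype Ω] [Fintype α] [Fintype β] [Fintype γ]
    (p : Ω → ℝ) (A : Ω → α) (B : Ω → β) (D : Ω → γ) :
    entropy p (fun ω => (A ω, D ω)) + entropy p (fun ω => (B ω, D ω))
      - entropy p (fun ω => (A ω, B ω, D ω)) - entropy p D
    = ∑ ω, p ω * (Real.log (pr p (fun ω' => A ω' = A ω ∧ B ω' = B ω ∧ D ω' = D ω))
        + Real.log (pr p (fun ω' => D ω' = D ω))
        - Real.log (pr p (fun ω' => A ω' = A ω ∧ D ω' = D ω))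
        - Real.log (pr p (fun ω' => B ω' = B ω ∧ D ω' = D ω))) := by
  simp only [entropy_eq_sum, Prod.mk.injEq, mul_add, mul_sub, Finset.sum_add_distrib,
    Finset.sum_sub_distrib]
  ring

lemma comb_eq_zero {Ω α β γ : Type*} [Fintype Ω] [Fintype α] [Fintype β] [Fintype γ]
    (p : Ω → ℝ) (hp : ∀ ω, 0 ≤ p ω) (A : Ω → α) (B : Ω → β) (D : Ω → γ)
    (h : CondIndep p A B D) :
    entropy p (fun ω => (A ω, D ω)) + entropy p (fun ω => (B ω, D ω))
      - entropy p (fun ω => (A ω, B ω, D ω)) - entropy p D = 0 := by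
  rw [entropy_comb]
  refine Finset.sum_eq_zero fun ω _ => ?_
  rcases (hp ω).eq_or_lt with h0 | h0
  · simp [← h0]
  have h1 := pr_pos p hp (fun ω' => A ω' = A ω ∧ B ω' = B ω ∧ D ω' = D ω) ω h0 (by simp)
  have h2 := pr_pos p hp (fun ω' => D ω' = D ω) ω h0 (by simp)
  have h3 := pr_pos p hp (fun ω' => A ω' = A ω ∧ D ω' = D ω) ω h0 (by simp)
  have h4 := pr_pos p hp (fun ω' => B ω' = B ω ∧ D ω' = D ω) ω h0 (by simp)
  have h5 := congrArg Real.log (h (A ω) (B ω) (D ω))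
  rw [Real.log_mul h1.ne' h2.ne', Real.log_mul h3.ne' h4.ne'] at h5
  rw [h5]
  ring

lemma comb_nonneg {Ω α β γ : Type*} [Fintype Ω] [Fintype α] [Fintype β] [Fintype γ]
    (p : Ω → ℝ) (hp : ∀ ω, 0 ≤ p ω) (A : Ω → α) (B : Ω → β) (D : Ω → γ) :
    0 ≤ entropy p (fun ω => (A ω, D ω)) + entropy p (fun ω => (B ω, D ω))
      - entropy p (fun ω => (A ω, B ω, D ω)) - entropy p D := by
  rw [entropy_comb]
  set P3 : α × β × γ → ℝ := fun x => pr p (fun ω' => A ω' = x.1 ∧ B ω' = x.2.1 ∧ D ω' = x.2.2)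
    with hP3
  set PD : γ → ℝ := fun d => pr p (fun ω' => D ω' = d) with hPD
  set PA : α → γ → ℝ := fun a d => pr p (fun ω' => A ω' = a ∧ D ω' = d) with hPA
  set PB : β → γ → ℝ := fun a d => pr p (fun ω' => B ω' = a ∧ D ω' = d) with hPB
  have key : ∑ ω, p ω * (PA (A ω) (D ω) * PB (B ω) (D ω) / (P3 (A ω, B ω, D ω) * PD (D ω)))
      ≤ ∑ ω, p ω := by
    have e1 := sum_pr_mul p (fun ω => (A ω, B ω, D ω))
      (fun x => PA x.1 x.2.2 * PB x.2.1 x.2.2 / (P3 x * PD x.2.2))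
    rw [← e1]
    have e2 : ∑ d, PD d = ∑ ω, p ω := by
      simpa using sum_pr_mul p D (fun _ => 1)
    rw [← e2]
    calc _ ≤ ∑ x : α × β × γ, PA x.1 x.2.2 * PB x.2.1 x.2.2 / PD x.2.2 := by
          refine Finset.sum_le_sum fun x _ => ?_
          have e3 : pr p (fun ω => (A ω, B ω, D ω) = x) = P3 x := by
            obtain ⟨a, b, d⟩ := x
            simp [hP3, Prod.mk.injEq]
          rw [e3]
          have nn : 0 ≤ PA x.1 x.2.2 * PB x.2.1 x.2.2 / PD x.2.2 :=
            div_nonneg (mul_nonneg (pr_nonneg p hp _) (pr_nonneg p hp _)) (pr_nonneg p hp _)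
          by_cases h0 : P3 x = 0
          · rw [h0]; simpa using nn
          · apply le_of_eq
            rw [mul_div_assoc', mul_div_mul_left _ _ h0]
      _ = ∑ d, PD d * PD d / PD d := by
          rw [Fintype.sum_prod_type]
          simp only [Fintype.sum_prod_type]
          have e4 : ∀ d, PD d * PD d / PD d = ∑ a, ∑ b, PA a d * PB b d / PD d := by
            intro d
            have eA : ∑ a, PA a d = PD d := sum_pr_and p A _
            have eB : ∑ b, PB b d = PD d := sum_pr_and p B _
            simp only [← Finset.sum_div, ← Finset.mul_sum, ← Finset.sum_mul, eA, eB]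
          simp only [e4]
          rw [Finset.sum_comm (s := (Finset.univ : Finset γ))]
          refine Finset.sum_congr rfl fun a _ => ?_
          rw [Finset.sum_comm]
      _ ≤ ∑ d, PD d := by
          refine Finset.sum_le_sum fun d _ => le_of_eq ?_
          by_cases h0 : PD d = 0
          · simp [h0]
          · field_simp
  have : ∑ ω, p ω * (1 - PA (A ω) (D ω) * PB (B ω) (D ω) / (P3 (A ω, B ω, D ω) * PD (D ω)))
      ≤ ∑ ω, p ω * (Real.log (P3 (A ω, B ω, D ω)) + Real.log (PD (D ω))
        - Real.log (PA (A ω) (D ω)) - Real.log (PB (B ω) (D ω))) := by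
    refine Finset.sum_le_sum fun ω _ => ?_
    rcases (hp ω).eq_or_lt with h0 | h0
    · simp [← h0]
    have h1 : 0 < P3 (A ω, B ω, D ω) := pr_pos p hp _ ω h0 (by simp)
    have h2 : 0 < PD (D ω) := pr_pos p hp _ ω h0 (by simp)
    have h3 : 0 < PA (A ω) (D ω) := pr_pos p hp _ ω h0 (by simp)
    have h4 : 0 < PB (B ω) (D ω) := pr_pos p hp _ ω h0 (by simp)
    refine mul_le_mul_of_nonneg_left ?_ h0.le
    have h5 := Real.log_le_sub_one_of_pos (div_pos (mul_pos h3 h4) (mul_pos h1 h2))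
    rw [Real.log_div (mul_pos h3 h4).ne' (mul_pos h1 h2).ne', Real.log_mul h1.ne' h2.ne',
      Real.log_mul h3.ne' h4.ne'] at h5
    linarith
  refine le_trans ?_ this
  simp only [mul_sub, mul_one, Finset.sum_sub_distrib]
  linarith

/-- Lemma 4 of the paper: if for each frame `k ≤ K'` the Markov chain
`(Z₁,…,Z_{k-1}, C) → (C_k, M) → Z_k` holds and each per-frame leakage is at most `δ`,
then the cumulative leakage up to frame `K'` is at most `K' · δ`. -/
theorem cumulative_leakage_bound
    {Ω 𝕄 γ ζ : Type*} [Fintype Ω] [Fintype 𝕄] [Fintype γ] [Fintype ζ]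
    (p : Ω → ℝ) (hp : ∀ ω, 0 ≤ p ω) (hp1 : ∑ ω, p ω = 1)
    (K K' : ℕ) (hK' : 1 ≤ K') (hK'K : K' ≤ K) (δ : ℝ) (hδ : 0 ≤ δ)
    (M : Ω → 𝕄) (C : Fin K → Ω → γ) (Z : Fin K → Ω → ζ)
    (hMarkov : ∀ k : Fin K, (k : ℕ) < K' →
      CondIndep p
        (fun ω => ((fun i : Fin (k : ℕ) => Z ⟨i, lt_trans i.isLt k.isLt⟩ ω),
                   (fun i : Fin K => C i ω)))
        (Z k)
        (fun ω => (C k ω, M ω)))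
    (hLeak : ∀ k : Fin K, (k : ℕ) < K' →
      condMutualInfo p M (Z k) (C k) ≤ δ) :
    condMutualInfo p M
        (fun ω => fun i : Fin K' => Z (Fin.castLE hK'K i) ω)
        (fun ω => fun i : Fin K => C i ω)
      ≤ (K' : ℝ) * δ := by
  have main : ∀ n : ℕ, ∀ hn : n ≤ K', condMutualInfo p M
        (fun ω => fun i : Fin n => Z (Fin.castLE (hn.trans hK'K) i) ω)
        (fun ω => fun i : Fin K => C i ω) ≤ (n : ℝ) * δ := by
    intro n
    induction n with
    | zero =>
      intro hn
      apply le_of_eq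
      rw [condMutualInfo]
      have e1 := entropy_congr p
        (fun ω => ((fun i : Fin 0 => Z (Fin.castLE (hn.trans hK'K) i) ω), (fun i => C i ω)))
        (fun ω => fun i : Fin K => C i ω) (by
          intro ω ω'
          simp only [Prod.mk.injEq]
          exact ⟨fun h => h.2, fun h => ⟨Subsingleton.elim _ _, h⟩⟩)
      have e2 := entropy_congr p
        (fun ω => (M ω, (fun i : Fin 0 => Z (Fin.castLE (hn.trans hK'K) i) ω), (fun i => C i ω)))
        (fun ω => (M ω, fun i : Fin K => C i ω)) (by
          intro ω ω'
          simp only [Prod.mk.injEq]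
          exact ⟨fun h => ⟨h.1, h.2.2⟩, fun h => ⟨h.1, Subsingleton.elim _ _, h.2⟩⟩)
      rw [e1, e2]
      simp
    | succ n ih =>
      intro hn
      have ih' := ih (by omega)
      have hk : n < K := by omega
      have hL := hLeak ⟨n, hk⟩ (by simpa using hn)
      have hM := comb_eq_zero p hp _ _ _ (hMarkov ⟨n, hk⟩ (by simpa using hn))
      have hS := comb_nonneg p hp
        (fun ω => ((fun i : Fin n => Z ⟨i, lt_trans i.isLt hk⟩ ω), (fun i : Fin K => C i ω)))
        (Z ⟨n, hk⟩) (C ⟨n, hk⟩)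
      have split : ∀ ω ω', ((fun i : Fin (n+1) => Z (Fin.castLE (hn.trans hK'K) i) ω') =
          (fun i : Fin (n+1) => Z (Fin.castLE (hn.trans hK'K) i) ω)) ↔
          ((fun i : Fin n => Z ⟨i, lt_trans i.isLt hk⟩ ω') =
            (fun i : Fin n => Z ⟨i, lt_trans i.isLt hk⟩ ω)) ∧ Z ⟨n, hk⟩ ω' = Z ⟨n, hk⟩ ω := by
        intro ω ω'
        simp only [funext_iff]
        rw [Fin.forall_fin_succ']
        rfl
      have hCn : ∀ ω ω', ((fun i : Fin K => C i ω') = (fun i : Fin K => C i ω)) →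
          C ⟨n, hk⟩ ω' = C ⟨n, hk⟩ ω := fun ω ω' h => congrFun h ⟨n, hk⟩
      have a1 := entropy_congr p
        (fun ω => ((fun i : Fin (n+1) => Z (Fin.castLE (hn.trans hK'K) i) ω), (fun i => C i ω)))
        (fun ω => (((fun i : Fin n => Z ⟨i, lt_trans i.isLt hk⟩ ω), (fun i : Fin K => C i ω)),
          Z ⟨n, hk⟩ ω, C ⟨n, hk⟩ ω)) (by
          intro ω ω'
          have := hCn ω ω'
          simp only [Prod.mk.injEq, split]
          tauto)
      have a2 := entropy_congr p
        (fun ω => (M ω, (fun i : Fin (n+1) => Z (Fin.castLE (hn.trans hK'K) i) ω),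
          (fun i => C i ω)))
        (fun ω => (((fun i : Fin n => Z ⟨i, lt_trans i.isLt hk⟩ ω), (fun i : Fin K => C i ω)),
          Z ⟨n, hk⟩ ω, C ⟨n, hk⟩ ω, M ω)) (by
          intro ω ω'
          have := hCn ω ω'
          simp only [Prod.mk.injEq, split]
          tauto)
      have a3 := entropy_congr p
        (fun ω => ((fun i : Fin n => Z ⟨i, lt_trans i.isLt hk⟩ ω), (fun i => C i ω)))
        (fun ω => (((fun i : Fin n => Z ⟨i, lt_trans i.isLt hk⟩ ω), (fun i : Fin K => C i ω)),
          C ⟨n, hk⟩ ω)) (by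
          intro ω ω'
          have := hCn ω ω'
          simp only [Prod.mk.injEq]
          tauto)
      have a4 := entropy_congr p
        (fun ω => (M ω, (fun i : Fin n => Z ⟨i, lt_trans i.isLt hk⟩ ω), (fun i => C i ω)))
        (fun ω => (((fun i : Fin n => Z ⟨i, lt_trans i.isLt hk⟩ ω), (fun i : Fin K => C i ω)),
          C ⟨n, hk⟩ ω, M ω)) (by
          intro ω ω'
          have := hCn ω ω'
          simp only [Prod.mk.injEq]
          tauto)
      have a5 := entropy_congr p (fun ω => (M ω, C ⟨n, hk⟩ ω)) (fun ω => (C ⟨n, hk⟩ ω, M ω)) (by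
          intro ω ω'
          simp only [Prod.mk.injEq]
          tauto)
      have a6 := entropy_congr p (fun ω => (M ω, Z ⟨n, hk⟩ ω, C ⟨n, hk⟩ ω))
        (fun ω => (Z ⟨n, hk⟩ ω, C ⟨n, hk⟩ ω, M ω)) (by
          intro ω ω'
          simp only [Prod.mk.injEq]
          tauto)
      simp only [condMutualInfo] at ih' hL ⊢
      change _ + entropy p (fun ω => ((fun i : Fin n => Z ⟨i, lt_trans i.isLt hk⟩ ω),
        (fun i => C i ω))) - entropy p (fun ω => (M ω,
        (fun i : Fin n => Z ⟨i, lt_trans i.isLt hk⟩ ω), (fun i => C i ω))) - _ ≤ _ at ih'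
      rw [a3, a4] at ih'
      rw [a5, a6] at hL
      rw [a1, a2]
      push_cast
      linarith
  exact main K' le_rfl
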